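/- For every 1 < p < ∞ there exists a continuous function f on ℝ², 1-periodic in both variables, such that f ∈ H_p^{(2)} but f ∉ V_p[V_p]. (One such function is f(x,y) = Σ_{n=1}^∞ 2^{−n/p} g_n(x) φ(2ⁿy), where φ(x) = dist(x,ℤ) and g_n is the 1-periodic extension of the function equal to φ(2ⁿx − 1) for x ∈ [0,1] with 2ⁿx − 1 ∈ [0,1] and 0 elsewhere on [0,1].) Consequently, H_p^{(2)} ⊄ V_p[V_p] for every 1 < p < ∞. -/

import Mathlib

open MeasureTheory Filter Set
open scoped ENNReal

noncomputable section

/-- A function of two real variables that is 1-periodic in each variable. -/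
def BiPeriodic (f : ℝ → ℝ → ℝ) : Prop :=
  (∀ x y, f (x + 1) y = f x y) ∧ (∀ x y, f x (y + 1) = f x y)

/-- A 1-periodic function of one real variable. -/
def Periodic1 (g : ℝ → ℝ) : Prop := ∀ x, g (x + 1) = g x

/-- The `L^p` norm of a function over `[0,1]^2` (as a value in `[0,∞]`). -/
noncomputable def lpNorm2 (p : ℝ) (f : ℝ → ℝ → ℝ) : ℝ≥0∞ :=
  (∫⁻ x in Set.Icc (0:ℝ) 1, ∫⁻ y in Set.Icc (0:ℝ) 1,
      ENNReal.ofReal (|f x y| ^ p)) ^ (1 / p)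

/-- The `L^p` norm of a function over `[0,1]` (as a value in `[0,∞]`). -/
noncomputable def lpNorm1 (p : ℝ) (g : ℝ → ℝ) : ℝ≥0∞ :=
  (∫⁻ x in Set.Icc (0:ℝ) 1, ENNReal.ofReal (|g x| ^ p)) ^ (1 / p)

/-- Membership in `L^p([0,1]^2)`: measurable, 1-periodic in each variable,
finite `L^p` norm. -/
def MemLp2 (p : ℝ) (f : ℝ → ℝ → ℝ) : Prop :=
  Measurable (Function.uncurry f) ∧ BiPeriodic f ∧ lpNorm2 p f < ⊤

/-- Membership in `L^p([0,1])` for 1-periodic functions of one variable. -/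
def MemLp1 (p : ℝ) (g : ℝ → ℝ) : Prop :=
  Measurable g ∧ Periodic1 g ∧ lpNorm1 p g < ⊤

/-- The (total) `L^p` modulus of continuity `ω(f;δ)_p` of a bivariate function. -/
noncomputable def modulus2 (p : ℝ) (f : ℝ → ℝ → ℝ) (δ : ℝ) : ℝ≥0∞ :=
  ⨆ (h : ℝ × ℝ) (_ : Real.sqrt (h.1 ^ 2 + h.2 ^ 2) ≤ δ),
    lpNorm2 p (fun x y => f (x + h.1) (y + h.2) - f x y)

/-- The `L^p` modulus of continuity `ω(g;δ)_p` of a univariate function. -/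
noncomputable def modulus1 (p : ℝ) (g : ℝ → ℝ) (δ : ℝ) : ℝ≥0∞ :=
  ⨆ (h : ℝ) (_ : h ∈ Set.Icc 0 δ), lpNorm1 p (fun x => g (x + h) - g x)

/-- The mixed `L^p` modulus of continuity `ω(f;u,v)_p`. -/
noncomputable def mixedModulus (p : ℝ) (f : ℝ → ℝ → ℝ) (u v : ℝ) : ℝ≥0∞ :=
  ⨆ (s : ℝ) (_ : s ∈ Set.Icc 0 u) (t : ℝ) (_ : t ∈ Set.Icc 0 v),
    lpNorm2 p (fun x y => f (x + s) (y + t) - f (x + s) y - f x (y + t) + f x y)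

/-- `J_p(f) = ∫₀¹ t^{-1/p} ω(f;t)_p dt/t`. -/
noncomputable def Jp (p : ℝ) (f : ℝ → ℝ → ℝ) : ℝ≥0∞ :=
  ∫⁻ t in Set.Ioc (0:ℝ) 1, ENNReal.ofReal (t ^ (-(1/p)) / t) * modulus2 p f t

/-- `K_p(f) = ∫₀¹ t^{-1/p} [ω(f;t,1)_p + ω(f;1,t)_p] dt/t`. -/
noncomputable def Kp (p : ℝ) (f : ℝ → ℝ → ℝ) : ℝ≥0∞ :=
  ∫⁻ t in Set.Ioc (0:ℝ) 1,
    ENNReal.ofReal (t ^ (-(1/p)) / t) * (mixedModulus p f t 1 + mixedModulus p f 1 t)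

/-- `I_p(f) = ∫₀¹∫₀¹ (uv)^{-1/p} ω(f;u,v)_p (du/u)(dv/v)`. -/
noncomputable def Ip (p : ℝ) (f : ℝ → ℝ → ℝ) : ℝ≥0∞ :=
  ∫⁻ u in Set.Ioc (0:ℝ) 1, ∫⁻ v in Set.Ioc (0:ℝ) 1,
    ENNReal.ofReal ((u * v) ^ (-(1/p)) / (u * v)) * mixedModulus p f u v

/-- The essential supremum norm of `f` over `[0,1]^2`. -/
noncomputable def supNorm2 (f : ℝ → ℝ → ℝ) : ℝ≥0∞ :=
  essSup (fun z : ℝ × ℝ => ENNReal.ofReal |f z.1 z.2|)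
    (volume.restrict ((Set.Icc (0:ℝ) 1) ×ˢ (Set.Icc (0:ℝ) 1)))

/-- The Wiener `p`-variation of a 1-periodic function `g`, as a value in `[0,∞]`:
the supremum over partitions `x₀ < x₁ < ... < xₙ = x₀ + 1` of
`(∑ |g(x_{k+1}) - g(x_k)|^p)^{1/p}`. -/
noncomputable def vp (p : ℝ) (g : ℝ → ℝ) : ℝ≥0∞ :=
  ⨆ (n : ℕ) (x : ℕ → ℝ) (_ : ∀ i < n, x i < x (i + 1)) (_ : x n = x 0 + 1),
    ENNReal.ofReal ((∑ k ∈ Finset.range n, |g (x (k + 1)) - g (x k)| ^ p) ^ (1 / p))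

/-- The Hardy–Vitali type total `p`-variation of a bivariate function,
as a value in `[0,∞]`: the supremum over nets of
`(∑∑ |Δf(x_i,y_j)|^p)^{1/p}`. -/
noncomputable def vp2 (p : ℝ) (f : ℝ → ℝ → ℝ) : ℝ≥0∞ :=
  ⨆ (m : ℕ) (n : ℕ) (x : ℕ → ℝ) (y : ℕ → ℝ)
    (_ : ∀ i < m, x i < x (i + 1)) (_ : x m = x 0 + 1)
    (_ : ∀ j < n, y j < y (j + 1)) (_ : y n = y 0 + 1),
    ENNReal.ofReal ((∑ i ∈ Finset.range m, ∑ j ∈ Finset.range n,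
      |f (x (i + 1)) (y (j + 1)) - f (x (i + 1)) (y j)
        - f (x i) (y (j + 1)) + f (x i) (y j)| ^ p) ^ (1 / p))

/-- Membership in the Hardy class `H_p^{(2)}`: finite Vitali `p`-variation and
all linear sections of bounded `p`-variation. -/
def MemHp2 (p : ℝ) (f : ℝ → ℝ → ℝ) : Prop :=
  vp2 p f < ⊤ ∧ (∀ x, vp p (fun y => f x y) < ⊤) ∧ (∀ y, vp p (fun x => f x y) < ⊤)

/-- Membership in the mixed norm class `V_p[V_p]`: all sections have bounded
`p`-variation and the functions `x ↦ v_p(f_x)`, `y ↦ v_p(f_y)` are themselves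
of bounded `p`-variation. -/
def MemVpVp (p : ℝ) (f : ℝ → ℝ → ℝ) : Prop :=
  (∀ x, vp p (fun y => f x y) < ⊤) ∧ (∀ y, vp p (fun x => f x y) < ⊤) ∧
  vp p (fun x => (vp p (fun y => f x y)).toReal) < ⊤ ∧
  vp p (fun y => (vp p (fun x => f x y)).toReal) < ⊤

/-- `W_p(f) = v_p(φ_p[f]) + v_p(ψ_p[f])`, where `φ_p[f](x) = v_p(f_x)` and
`ψ_p[f](y) = v_p(f_y)`. -/
noncomputable def Wp (p : ℝ) (f : ℝ → ℝ → ℝ) : ℝ≥0∞ :=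
  vp p (fun x => (vp p (fun y => f x y)).toReal)
    + vp p (fun y => (vp p (fun x => f x y)).toReal)

/-- Membership in `L^p_0([0,1]^2)`: membership in `L^p([0,1]^2)` together with
vanishing of the linear mean values `∫₀¹ f(x,t) dt` and `∫₀¹ f(t,y) dt` for a.e.
`x` resp. `y`. -/
def MemLp20 (p : ℝ) (f : ℝ → ℝ → ℝ) : Prop :=
  MemLp2 p f ∧ (∀ᵐ x : ℝ ∂volume, ∫ t in (0:ℝ)..1, f x t = 0) ∧
    (∀ᵐ y : ℝ ∂volume, ∫ t in (0:ℝ)..1, f t y = 0)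

/-- `T` is a trigonometric polynomial of degree `(n,m)` in two variables. -/
def IsTrigPoly2 (n m : ℕ) (T : ℝ → ℝ → ℝ) : Prop :=
  ∃ a b c d : ℕ → ℕ → ℝ, ∀ x y : ℝ,
    T x y = ∑ j ∈ Finset.range (n + 1), ∑ k ∈ Finset.range (m + 1),
      (a j k * Real.cos (2 * Real.pi * j * x) * Real.cos (2 * Real.pi * k * y)
        + b j k * Real.cos (2 * Real.pi * j * x) * Real.sin (2 * Real.pi * k * y)
        + c j k * Real.sin (2 * Real.pi * j * x) * Real.cos (2 * Real.pi * k * y)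
        + d j k * Real.sin (2 * Real.pi * j * x) * Real.sin (2 * Real.pi * k * y))

end

/-!
The function is `f(x, y) = ∑ₙ gₙ(x) hₙ(y)` with `gₙ` a tent supported on `(2⁻ⁿ, 2¹⁻ⁿ)` and
`hₙ(y) = 2^(-n/p) φ(2ⁿ y)`, `φ` being the distance to `ℤ`.

* The tents have disjoint supports, so `∑ₙ |Δgₙ|` is bounded and Hölder's inequality with weights
  `|Δgₙ|` gives `|Δf|ᵖ ≤ C ∑ₙ |Δgₙ| |Δhₙ|ᵖ`. Summing over the `x`-partition replaces `|Δgₙ|` by the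
  total variation of `gₙ`, which is bounded in `n`, and `∑ₙ |hₙ(z) - hₙ(y)|ᵖ ≤ C |z - y|` by a
  two-sided geometric series. Hence `f ∈ H_p⁽²⁾`.
* On the line `x = 2⁻ᵏ` all `gₙ` vanish, while `x = 3 / 2ᵏ⁺¹` is the peak of `gₖ`, where
  `f(x, ·) = hₖ / 2` has `p`-variation at least `1/4`. So `x ↦ v_p(f(x, ·))` oscillates by a fixed
  amount infinitely often as `x → 0`, and `f ∉ V_p[V_p]`.
-/

section Counterexample

variable {p : ℝ}

/-! ### Partitions of a period -/

/-- `x 0 < x 1 < ⋯ < x n = x 0 + 1`: the partitions over which `vp` and `vp2` take suprema. The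
values `x i` with `i > n` are irrelevant. -/
structure IsPeriodPartition (n : ℕ) (x : ℕ → ℝ) : Prop where
  lt_succ : ∀ i < n, x i < x (i + 1)
  last_eq : x n = x 0 + 1

theorem IsPeriodPartition.sum_sub_eq {n : ℕ} {x : ℕ → ℝ} (hx : IsPeriodPartition n x)
    {F : ℝ → ℝ} {c : ℝ} (hF : ∀ t, F (t + 1) = F t + c) :
    ∑ i ∈ Finset.range n, (F (x (i + 1)) - F (x i)) = c := by
  rw [Finset.sum_range_sub (fun i => F (x i)), hx.last_eq, hF, add_sub_cancel_left]

theorem IsPeriodPartition.sum_abs_sub_le {n : ℕ} {x : ℕ → ℝ} (hx : IsPeriodPartition n x)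
    {F G : ℝ → ℝ} {c d : ℝ} (hF : Monotone F) (hG : Monotone G)
    (hFc : ∀ t, F (t + 1) = F t + c) (hGd : ∀ t, G (t + 1) = G t + d) :
    ∑ i ∈ Finset.range n, |(F (x (i + 1)) - G (x (i + 1))) - (F (x i) - G (x i))| ≤ c + d := by
  have increment_le : ∀ i ∈ Finset.range n,
      |(F (x (i + 1)) - G (x (i + 1))) - (F (x i) - G (x i))| ≤
        (F (x (i + 1)) - F (x i)) + (G (x (i + 1)) - G (x i)) := by
    intro i hi
    have hi := (hx.lt_succ i (Finset.mem_range.1 hi)).le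
    rw [abs_le]
    constructor <;> linarith [hF hi, hG hi]
  exact (Finset.sum_le_sum increment_le).trans_eq <| by
    rw [Finset.sum_add_distrib, hx.sum_sub_eq hFc, hx.sum_sub_eq hGd]

theorem le_vp {n : ℕ} {x : ℕ → ℝ} (hx : IsPeriodPartition n x) (p : ℝ) (g : ℝ → ℝ) :
    ENNReal.ofReal ((∑ k ∈ Finset.range n, |g (x (k + 1)) - g (x k)| ^ p) ^ (1 / p)) ≤ vp p g :=
  le_iSup_of_le n <| le_iSup_of_le x <| le_iSup_of_le hx.lt_succ <| le_iSup_of_le hx.last_eq le_rfl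

theorem vp_lt_top_of_sum_le (hp : 0 ≤ p) {g : ℝ → ℝ} {C : ℝ}
    (h : ∀ n x, IsPeriodPartition n x →
      ∑ i ∈ Finset.range n, |g (x (i + 1)) - g (x i)| ^ p ≤ C) :
    vp p g < ⊤ := by
  refine lt_of_le_of_lt ?_ (ENNReal.ofReal_lt_top (r := C ^ (1 / p)))
  refine iSup_le fun n => iSup_le fun x => iSup_le fun hlt => iSup_le fun hlast => ?_
  gcongr
  exact h n x ⟨hlt, hlast⟩

theorem vp2_lt_top_of_sum_le (hp : 0 ≤ p) {f : ℝ → ℝ → ℝ} {C : ℝ}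
    (h : ∀ m n x y, IsPeriodPartition m x → IsPeriodPartition n y →
      ∑ i ∈ Finset.range m, ∑ j ∈ Finset.range n,
        |f (x (i + 1)) (y (j + 1)) - f (x (i + 1)) (y j)
          - f (x i) (y (j + 1)) + f (x i) (y j)| ^ p ≤ C) :
    vp2 p f < ⊤ := by
  refine lt_of_le_of_lt ?_ (ENNReal.ofReal_lt_top (r := C ^ (1 / p)))
  refine iSup_le fun m => iSup_le fun n => iSup_le fun x => iSup_le fun y =>
    iSup_le fun hxlt => iSup_le fun hxlast => iSup_le fun hylt => iSup_le fun hylast => ?_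
  gcongr
  exact h m n x y ⟨hxlt, hxlast⟩ ⟨hylt, hylast⟩

theorem vp_const (hp : p ≠ 0) (c : ℝ) : vp p (fun _ => c) = 0 := by
  simp [vp, Real.zero_rpow hp, Real.zero_rpow (inv_ne_zero hp)]

theorem isPeriodPartition_of_strictAnti {u : ℕ → ℝ} (hu : StrictAnti u) {n : ℕ}
    (hn : u 0 < u n + 1) :
    IsPeriodPartition (n + 1) (fun i => if i ≤ n then u (n - i) else u n + 1) where
  lt_succ i hi := by
    rcases (Nat.lt_succ_iff.1 hi).eq_or_lt with rfl | hi
    · simpa using hn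
    · simpa only [hi.le, Nat.succ_le_of_lt hi, if_true] using hu (by omega)
  last_eq := by simp

theorem vp_eq_top_of_strictAnti (hp : 0 < p) {g : ℝ → ℝ} {u : ℕ → ℝ} {c : ℝ}
    (hu : StrictAnti u) (hperiod : ∀ n, u 0 < u n + 1) (hc : 0 < c)
    (hgap : ∀ k, c ≤ |g (u (k + 1)) - g (u k)|) :
    vp p g = ⊤ := by
  have lower_bound : ∀ n : ℕ, ENNReal.ofReal ((n * c ^ p) ^ (1 / p)) ≤ vp p g := by
    intro n
    refine le_trans ?_ (le_vp (isPeriodPartition_of_strictAnti hu (hperiod n)) p g)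
    gcongr
    rw [Finset.sum_range_succ]
    refine le_add_of_le_of_nonneg ?_ (by positivity)
    have gap_le : ∀ i ∈ Finset.range n, c ^ p ≤
        |g (if i + 1 ≤ n then u (n - (i + 1)) else u n + 1) -
          g (if i ≤ n then u (n - i) else u n + 1)| ^ p := by
      intro i hi
      have hi := Finset.mem_range.1 hi
      rw [if_pos (by omega), if_pos hi.le, abs_sub_comm,
        show n - i = n - (i + 1) + 1 by omega]
      gcongr
      exact hgap _
    simpa using Finset.card_nsmul_le_sum _ _ _ gap_le
  have lower_bound_tendsto : Tendsto (fun n : ℕ => ((n * c ^ p) ^ (1 / p) : ℝ)) atTop atTop :=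
    (tendsto_rpow_atTop (by positivity)).comp <|
      tendsto_natCast_atTop_atTop.atTop_mul_const (by positivity)
  exact top_le_iff.1 <|
    le_of_tendsto' (ENNReal.tendsto_ofReal_nhds_top.2 lower_bound_tendsto) lower_bound

/-! ### Series of products -/

section Series

variable {ι κ ν : Type*}

theorem abs_sum_mul_rpow_le (hp : 1 ≤ p) (s : Finset ν) (w z : ν → ℝ) :
    |∑ n ∈ s, w n * z n| ^ p ≤ (∑ n ∈ s, |w n|) ^ (p - 1) * ∑ n ∈ s, |w n| * |z n| ^ p := by
  have hp0 : 0 < p := by linarith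
  have hw : 0 ≤ ∑ n ∈ s, |w n| := by positivity
  have hwz : 0 ≤ ∑ n ∈ s, |w n| * |z n| ^ p := by positivity
  have weighted_holder : |∑ n ∈ s, w n * z n| ≤
      (∑ n ∈ s, |w n|) ^ (1 - p⁻¹) * (∑ n ∈ s, |w n| * |z n| ^ p) ^ p⁻¹ :=
    calc |∑ n ∈ s, w n * z n| ≤ ∑ n ∈ s, |w n| * |z n| := by
          simpa only [abs_mul] using Finset.abs_sum_le_sum_abs (fun n => w n * z n) s
      _ ≤ _ := Real.inner_le_weight_mul_Lp_of_nonneg s hp _ _ (fun _ => abs_nonneg _)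
          (fun _ => abs_nonneg _)
  calc |∑ n ∈ s, w n * z n| ^ p
      ≤ ((∑ n ∈ s, |w n|) ^ (1 - p⁻¹) * (∑ n ∈ s, |w n| * |z n| ^ p) ^ p⁻¹) ^ p := by gcongr
    _ = (∑ n ∈ s, |w n|) ^ (p - 1) * ∑ n ∈ s, |w n| * |z n| ^ p := by
      rw [Real.mul_rpow (by positivity) (by positivity), ← Real.rpow_mul hw,
        Real.rpow_inv_rpow hwz hp0.ne', sub_mul, inv_mul_cancel₀ hp0.ne', one_mul]

theorem sum_sum_abs_sum_mul_rpow_le (hp : 1 ≤ p) (I : Finset ι) (J : Finset κ) (s : Finset ν)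
    {a : ι → ν → ℝ} {b : κ → ν → ℝ} {K V B : ℝ} (hK₀ : 0 ≤ K) (hV₀ : 0 ≤ V)
    (hK : ∀ i ∈ I, ∑ n ∈ s, |a i n| ≤ K) (hV : ∀ n ∈ s, ∑ i ∈ I, |a i n| ≤ V)
    (hB : ∑ j ∈ J, ∑ n ∈ s, |b j n| ^ p ≤ B) :
    ∑ i ∈ I, ∑ j ∈ J, |∑ n ∈ s, a i n * b j n| ^ p ≤ K ^ (p - 1) * (V * B) := by
  calc ∑ i ∈ I, ∑ j ∈ J, |∑ n ∈ s, a i n * b j n| ^ p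
      ≤ ∑ i ∈ I, ∑ j ∈ J, K ^ (p - 1) * ∑ n ∈ s, |a i n| * |b j n| ^ p := by
        gcongr with i hi j _
        exact (abs_sum_mul_rpow_le hp s (a i) (b j)).trans <|
          mul_le_mul_of_nonneg_right
            (Real.rpow_le_rpow (by positivity) (hK i hi) (sub_nonneg.2 hp)) (by positivity)
    _ = K ^ (p - 1) * ∑ j ∈ J, ∑ n ∈ s, (∑ i ∈ I, |a i n|) * |b j n| ^ p := by
        simp_rw [← Finset.mul_sum, Finset.sum_mul]
        rw [Finset.sum_comm]
        exact congrArg _ (Finset.sum_congr rfl fun j _ => Finset.sum_comm)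
    _ ≤ K ^ (p - 1) * ∑ j ∈ J, ∑ n ∈ s, V * |b j n| ^ p := by
        gcongr with j _ n hn
        exact hV n hn
    _ ≤ K ^ (p - 1) * (V * B) := by
        simp_rw [← Finset.mul_sum]
        gcongr

theorem sum_sum_abs_rpow_le_of_hasSum (hp : 1 ≤ p) (I : Finset ι) (J : Finset κ)
    {a : ι → ℕ → ℝ} {b : κ → ℕ → ℝ} {D : ι → κ → ℝ} {K V B : ℝ} (hK₀ : 0 ≤ K)
    (hD : ∀ i ∈ I, ∀ j ∈ J, HasSum (fun n => a i n * b j n) (D i j))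
    (hK : ∀ N, ∀ i ∈ I, ∑ n ∈ Finset.range N, |a i n| ≤ K)
    (hV : ∀ n, ∑ i ∈ I, |a i n| ≤ V)
    (hB : ∀ N, ∑ j ∈ J, ∑ n ∈ Finset.range N, |b j n| ^ p ≤ B) :
    ∑ i ∈ I, ∑ j ∈ J, |D i j| ^ p ≤ K ^ (p - 1) * (V * B) := by
  have hV₀ : 0 ≤ V := (Finset.sum_nonneg fun _ _ => abs_nonneg _).trans (hV 0)
  have partial_sums_tendsto :
      Tendsto (fun N => ∑ i ∈ I, ∑ j ∈ J, |∑ n ∈ Finset.range N, a i n * b j n| ^ p) atTop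
        (nhds (∑ i ∈ I, ∑ j ∈ J, |D i j| ^ p)) :=
    tendsto_finsetSum _ fun i hi => tendsto_finsetSum _ fun j hj =>
      (hD i hi j hj).tendsto_sum_nat.abs.rpow_const (Or.inr (by linarith))
  exact le_of_tendsto' partial_sums_tendsto fun N =>
    sum_sum_abs_sum_mul_rpow_le hp I J _ hK₀ hV₀ (hK N) (fun n _ => hV n) (hB N)

end Series

section MemHp2

variable {f : ℝ → ℝ → ℝ} {g h : ℕ → ℝ → ℝ} {K V B : ℝ}

theorem abs_le_of_sum_range_abs_le (hK : ∀ N x, ∑ n ∈ Finset.range N, |g n x| ≤ K) (n : ℕ)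
    (x : ℝ) : |g n x| ≤ K :=
  (Finset.single_le_sum (f := fun n => |g n x|) (fun _ _ => abs_nonneg _)
    (Finset.self_mem_range_succ n)).trans (hK (n + 1) x)

theorem sum_abs_sub_le_two_mul (hK : ∀ N x, ∑ n ∈ Finset.range N, |g n x| ≤ K) (N : ℕ)
    (x x' : ℝ) : ∑ n ∈ Finset.range N, |g n x - g n x'| ≤ 2 * K :=
  calc ∑ n ∈ Finset.range N, |g n x - g n x'|
      ≤ ∑ n ∈ Finset.range N, (|g n x| + |g n x'|) := Finset.sum_le_sum fun _ _ => abs_sub _ _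
    _ ≤ 2 * K := by
        rw [Finset.sum_add_distrib]
        linarith [hK N x, hK N x']

theorem vp2_lt_top_of_hasSum_mul (hp : 1 ≤ p)
    (hf : ∀ x y, HasSum (fun n => g n x * h n y) (f x y))
    (hK : ∀ N x, ∑ n ∈ Finset.range N, |g n x| ≤ K)
    (hV : ∀ n m x, IsPeriodPartition m x →
      ∑ i ∈ Finset.range m, |g n (x (i + 1)) - g n (x i)| ≤ V)
    (hB : ∀ N m y, IsPeriodPartition m y →
      ∑ j ∈ Finset.range m, ∑ n ∈ Finset.range N, |h n (y (j + 1)) - h n (y j)| ^ p ≤ B) :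
    vp2 p f < ⊤ := by
  have hK₀ : 0 ≤ K := by simpa using hK 0 0
  refine vp2_lt_top_of_sum_le (by linarith) (C := (2 * K) ^ (p - 1) * (V * B))
    fun m k x y hx hy => ?_
  refine sum_sum_abs_rpow_le_of_hasSum hp (Finset.range m) (Finset.range k)
    (a := fun i n => g n (x (i + 1)) - g n (x i)) (b := fun j n => h n (y (j + 1)) - h n (y j))
    (by positivity) (fun i _ j _ => ?_) (fun N i _ => sum_abs_sub_le_two_mul hK N _ _)
    (fun n => hV n m x hx) (fun N => hB N k y hy)
  refine ((((hf _ _).sub (hf _ _)).sub (hf _ _)).add (hf _ _)).congr_fun fun n => ?_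
  ring

theorem vp_left_section_lt_top_of_hasSum_mul (hp : 1 ≤ p)
    (hf : ∀ x y, HasSum (fun n => g n x * h n y) (f x y))
    (hK : ∀ N x, ∑ n ∈ Finset.range N, |g n x| ≤ K)
    (hB : ∀ N m y, IsPeriodPartition m y →
      ∑ j ∈ Finset.range m, ∑ n ∈ Finset.range N, |h n (y (j + 1)) - h n (y j)| ^ p ≤ B)
    (x : ℝ) : vp p (fun y => f x y) < ⊤ := by
  have hK₀ : 0 ≤ K := by simpa using hK 0 0
  refine vp_lt_top_of_sum_le (by linarith) (C := K ^ (p - 1) * (K * B)) fun k y hy => ?_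
  simpa using sum_sum_abs_rpow_le_of_hasSum hp (Finset.univ : Finset Unit) (Finset.range k)
    (a := fun _ n => g n x) (b := fun j n => h n (y (j + 1)) - h n (y j))
    (D := fun _ j => f x (y (j + 1)) - f x (y j)) hK₀
    (fun _ _ j _ => ((hf _ _).sub (hf _ _)).congr_fun fun n => mul_sub _ _ _)
    (fun N _ _ => hK N x) (fun n => by simpa using abs_le_of_sum_range_abs_le hK n x)
    (fun N => hB N k y hy)

theorem vp_right_section_lt_top_of_hasSum_mul (hp : 1 ≤ p)
    (hf : ∀ x y, HasSum (fun n => g n x * h n y) (f x y))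
    (hK : ∀ N x, ∑ n ∈ Finset.range N, |g n x| ≤ K)
    (hV : ∀ n m x, IsPeriodPartition m x →
      ∑ i ∈ Finset.range m, |g n (x (i + 1)) - g n (x i)| ≤ V)
    {y : ℝ} (hB : ∀ N, ∑ n ∈ Finset.range N, |h n y| ^ p ≤ B) :
    vp p (fun x => f x y) < ⊤ := by
  have hK₀ : 0 ≤ K := by simpa using hK 0 0
  refine vp_lt_top_of_sum_le (by linarith) (C := (2 * K) ^ (p - 1) * (V * B)) fun m x hx => ?_
  simpa using sum_sum_abs_rpow_le_of_hasSum hp (Finset.range m) (Finset.univ : Finset Unit)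
    (a := fun i n => g n (x (i + 1)) - g n (x i)) (b := fun _ n => h n y)
    (D := fun i _ => f (x (i + 1)) y - f (x i) y) (by positivity)
    (fun i _ _ _ => ((hf _ _).sub (hf _ _)).congr_fun fun n => sub_mul _ _ _)
    (fun N i _ => sum_abs_sub_le_two_mul hK N _ _) (fun n => hV n m x hx) (by simpa using hB)

end MemHp2

/-! ### The tents `gₙ` -/

/-- The function equal to `dist(s, ℤ)` for `s ∈ [1, 2]` and to `0` elsewhere. -/
noncomputable def tent (s : ℝ) : ℝ := max 0 (1 / 2 - |s - 3 / 2|)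

/-- The nondecreasing function rising from `0` at `t = 0` to `1/2` at `t = 1/2`; a tent is the
difference of two ramps. -/
noncomputable def ramp (t : ℝ) : ℝ := max 0 (min (1 / 2) t)

theorem ramp_nonneg (t : ℝ) : 0 ≤ ramp t := le_max_left _ _

theorem ramp_le_half (t : ℝ) : ramp t ≤ 1 / 2 := max_le (by norm_num) (min_le_left _ _)

theorem monotone_ramp : Monotone ramp := fun _ _ h => max_le_max_left _ (min_le_min_left _ h)

theorem tent_nonneg (s : ℝ) : 0 ≤ tent s := le_max_left _ _

theorem continuous_tent : Continuous tent := by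
  unfold tent
  fun_prop

theorem tent_of_le_one {s : ℝ} (hs : s ≤ 1) : tent s = 0 :=
  max_eq_left <| by linarith [neg_le_abs (s - 3 / 2)]

theorem tent_of_two_le {s : ℝ} (hs : 2 ≤ s) : tent s = 0 :=
  max_eq_left <| by linarith [le_abs_self (s - 3 / 2)]

theorem tent_three_halves : tent (3 / 2) = 1 / 2 := by norm_num [tent]

theorem tent_eq_ramp_sub_ramp (s : ℝ) : tent s = ramp (s - 1) - ramp (s - 3 / 2) := by
  unfold tent ramp
  grind

theorem tent_le_ramp_sub_ramp_half (s : ℝ) : tent s ≤ ramp (s - 1) - ramp (s / 2 - 1) := by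
  unfold tent ramp
  grind

theorem sum_tent_two_pow_mul_le (N : ℕ) (s : ℝ) :
    ∑ n ∈ Finset.range N, tent (2 ^ n * s) ≤ 1 / 2 := by
  have tent_le : ∀ n ∈ Finset.range N,
      tent (2 ^ n * s) ≤ ramp (2 ^ (n + 1) * s / 2 - 1) - ramp (2 ^ n * s / 2 - 1) := by
    intro n _
    have := tent_le_ramp_sub_ramp_half (2 ^ n * s)
    rwa [show 2 ^ n * s = 2 ^ (n + 1) * s / 2 by ring] at this ⊢
  refine (Finset.sum_le_sum tent_le).trans ?_
  rw [Finset.sum_range_sub (fun n => ramp (2 ^ n * s / 2 - 1))]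
  linarith [ramp_le_half (2 ^ N * s / 2 - 1), ramp_nonneg (2 ^ 0 * s / 2 - 1)]

theorem tent_two_zpow (m : ℤ) : tent (2 ^ m) = 0 := by
  rcases le_or_gt m 0 with hm | hm
  · exact tent_of_le_one (zpow_le_one_of_nonpos₀ one_le_two hm)
  · exact tent_of_two_le (by simpa using zpow_le_zpow_right₀ (one_le_two (α := ℝ)) hm)

theorem tent_two_zpow_mul_three_halves {m : ℤ} (hm : m ≠ 0) : tent (2 ^ m * (3 / 2)) = 0 := by
  rcases hm.lt_or_gt with hm | hm
  · have : (2 : ℝ) ^ m ≤ 2 ^ (-1 : ℤ) := zpow_le_zpow_right₀ one_le_two (by omega)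
    exact tent_of_le_one (by norm_num at this; linarith)
  · have : (2 : ℝ) ^ (1 : ℤ) ≤ 2 ^ m := zpow_le_zpow_right₀ one_le_two hm
    exact tent_of_two_le (by norm_num at this; linarith)

/-- Extends `F : [0, 1] → [0, c]` to the line so that each period adds `c`; a nondecreasing `F`
has a nondecreasing extension. -/
noncomputable def staircase (F : ℝ → ℝ) (c x : ℝ) : ℝ := ⌊x⌋ * c + F (Int.fract x)

theorem staircase_add_one (F : ℝ → ℝ) (c x : ℝ) :
    staircase F c (x + 1) = staircase F c x + c := by
  simp only [staircase, Int.fract_add_one, Int.floor_add_one, Int.cast_add, Int.cast_one]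
  ring

theorem monotone_staircase {F : ℝ → ℝ} {c : ℝ} (hF : Monotone F) (hF₀ : ∀ t, 0 ≤ F t)
    (hFc : ∀ t, F t ≤ c) : Monotone (staircase F c) := by
  intro x y hxy
  unfold staircase
  rcases (Int.floor_mono hxy).eq_or_lt with same_floor | floor_lt
  · have : Int.fract x ≤ Int.fract y := by
      simp only [Int.fract, same_floor]
      linarith
    rw [same_floor]
    linarith [hF this]
  · have floor_add_one_le : (⌊x⌋ : ℝ) + 1 ≤ ⌊y⌋ := by exact_mod_cast floor_lt
    have hc : 0 ≤ c := (hF₀ 0).trans (hFc 0)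
    nlinarith [hF₀ (Int.fract y), hFc (Int.fract x)]

/-- The `gₙ` of the paper: the `1`-periodic function equal to `tent (2 ^ n * x)` on `[0, 1)`. It
vanishes identically for `n = 0`, so that series over `n ≥ 1` may start at `n = 0`. -/
noncomputable def periodicTent (n : ℕ) (x : ℝ) : ℝ := tent (2 ^ n * Int.fract x)

theorem periodicTent_nonneg (n : ℕ) (x : ℝ) : 0 ≤ periodicTent n x := tent_nonneg _

theorem periodicTent_add_one (n : ℕ) (x : ℝ) : periodicTent n (x + 1) = periodicTent n x := by
  rw [periodicTent, Int.fract_add_one, periodicTent]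

theorem continuous_periodicTent (n : ℕ) : Continuous (periodicTent n) := by
  refine ContinuousOn.comp_fract'' (f := fun t : ℝ => tent (2 ^ n * t))
    (continuous_tent.comp (continuous_const_mul _)).continuousOn ?_
  rw [mul_zero, mul_one, tent_of_le_one zero_le_one, ← zpow_natCast, tent_two_zpow]

theorem sum_abs_periodicTent_le (N : ℕ) (x : ℝ) :
    ∑ n ∈ Finset.range N, |periodicTent n x| ≤ 1 / 2 := by
  simp only [abs_of_nonneg (periodicTent_nonneg _ x)]
  exact sum_tent_two_pow_mul_le N (Int.fract x)

theorem sum_abs_periodicTent_sub_le (n : ℕ) {m : ℕ} {x : ℕ → ℝ} (hx : IsPeriodPartition m x) :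
    ∑ i ∈ Finset.range m, |periodicTent n (x (i + 1)) - periodicTent n (x i)| ≤ 1 := by
  set stair : ℝ → ℝ → ℝ := fun c => staircase (fun t => ramp (2 ^ n * t - c)) (1 / 2)
  have stair_monotone (c : ℝ) : Monotone (stair c) :=
    monotone_staircase (fun _ _ h => monotone_ramp (by gcongr)) (fun _ => ramp_nonneg _)
      (fun _ => ramp_le_half _)
  have periodicTent_eq (t : ℝ) : periodicTent n t = stair 1 t - stair (3 / 2) t := by
    simp only [periodicTent, tent_eq_ramp_sub_ramp, stair, staircase]
    ring
  simp only [periodicTent_eq]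
  exact (hx.sum_abs_sub_le (stair_monotone 1) (stair_monotone (3 / 2)) (staircase_add_one _ _)
    (staircase_add_one _ _)).trans_eq (by norm_num)

theorem periodicTent_one_div_two_pow (n k : ℕ) : periodicTent n (1 / 2 ^ (k + 1)) = 0 := by
  have fract_eq : Int.fract (1 / 2 ^ (k + 1) : ℝ) = 1 / 2 ^ (k + 1) :=
    Int.fract_eq_self.2 ⟨by positivity, (div_lt_one (by positivity)).2
      (one_lt_pow₀ one_lt_two k.succ_ne_zero)⟩
  rw [periodicTent, fract_eq, ← tent_two_zpow (n - (k + 1 : ℕ)), zpow_sub₀ two_ne_zero,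
    zpow_natCast, zpow_natCast, mul_one_div]

theorem periodicTent_three_halves_div_two_pow (n k : ℕ) :
    periodicTent n (3 / 2 / 2 ^ (k + 1)) = if n = k + 1 then 1 / 2 else 0 := by
  have fract_eq : Int.fract (3 / 2 / 2 ^ (k + 1) : ℝ) = 3 / 2 / 2 ^ (k + 1) := by
    refine Int.fract_eq_self.2 ⟨by positivity, (div_lt_one (by positivity)).2 ?_⟩
    have : (1 : ℝ) ≤ 2 ^ k := one_le_pow₀ one_le_two
    rw [pow_succ]
    linarith
  have scaled_eq : (2 : ℝ) ^ n * (3 / 2 / 2 ^ (k + 1)) = 2 ^ (n - (k + 1 : ℕ) : ℤ) * (3 / 2) := by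
    rw [zpow_sub₀ two_ne_zero, zpow_natCast, zpow_natCast]
    ring
  rw [periodicTent, fract_eq, scaled_eq]
  split_ifs with h
  · rw [h, sub_self, zpow_zero, one_mul, tent_three_halves]
  · exact tent_two_zpow_mul_three_halves (by omega)

/-! ### A dyadic sum -/

/-- The increments `t * (Ψ (2 * t) - Ψ t)` of this bounded function `Ψ` dominate `min 1 t ^ p`: its
first term takes care of `t ≤ 1/2` and its second term of `t ≥ 1/2`. -/
noncomputable def dyadicPotential (p t : ℝ) : ℝ :=
  min 1 t ^ (p - 1) / (2 ^ (p - 1) - 1) - 2 * min 2 (1 / t)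

theorem two_rpow_sub_one_sub_one_pos (hp : 1 < p) : 0 < (2 : ℝ) ^ (p - 1) - 1 :=
  sub_pos.2 (Real.one_lt_rpow one_lt_two (by linarith))

theorem neg_four_le_dyadicPotential (hp : 1 < p) {t : ℝ} (ht : 0 < t) :
    -4 ≤ dyadicPotential p t := by
  have hc := two_rpow_sub_one_sub_one_pos hp
  have : 0 ≤ min 1 t ^ (p - 1) / (2 ^ (p - 1) - 1) := by positivity
  unfold dyadicPotential
  linarith [min_le_left 2 (1 / t)]

theorem dyadicPotential_le (hp : 1 < p) {t : ℝ} (ht : 0 < t) :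
    dyadicPotential p t ≤ 1 / (2 ^ (p - 1) - 1) := by
  have hc := two_rpow_sub_one_sub_one_pos hp
  have : 0 ≤ min 2 (1 / t) := by positivity
  have : min 1 t ^ (p - 1) / (2 ^ (p - 1) - 1) ≤ 1 / (2 ^ (p - 1) - 1) := by
    gcongr
    exact Real.rpow_le_one (by positivity) (min_le_left _ _) (by linarith)
  unfold dyadicPotential
  linarith

theorem min_one_rpow_le_dyadicPotential_sub (hp : 1 < p) {t : ℝ} (ht : 0 < t) :
    min 1 t ^ p ≤ t * (dyadicPotential p (2 * t) - dyadicPotential p t) := by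
  have hc := two_rpow_sub_one_sub_one_pos hp
  unfold dyadicPotential
  rcases le_total t (1 / 2) with small | large
  · rw [min_eq_right (by linarith : t ≤ 1), min_eq_right (by linarith : 2 * t ≤ 1),
      Real.mul_rpow zero_le_two ht.le, min_eq_left ((le_div_iff₀ ht).2 (by linarith))]
    calc t ^ p = t * t ^ (p - 1) := by rw [← Real.rpow_one_add' ht.le (by linarith)]; ring_nf
      _ = t * (2 ^ (p - 1) * t ^ (p - 1) / (2 ^ (p - 1) - 1) -
          t ^ (p - 1) / (2 ^ (p - 1) - 1)) := by
        field_simp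
      _ ≤ _ := mul_le_mul_of_nonneg_left (by linarith [min_le_left 2 (1 / (2 * t))]) ht.le
  · rw [min_eq_right ((div_le_iff₀ ht).2 (by linarith) : 1 / t ≤ 2),
      min_eq_right ((div_le_iff₀ (by positivity)).2 (by linarith) : 1 / (2 * t) ≤ 2)]
    calc min 1 t ^ p ≤ 1 := Real.rpow_le_one (by positivity) (min_le_left _ _) (by linarith)
      _ = t * (2 * (1 / t) - 2 * (1 / (2 * t))) := by
        field_simp
        ring
      _ ≤ _ := by
        have : min 1 t ^ (p - 1) / (2 ^ (p - 1) - 1) ≤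
            min 1 (2 * t) ^ (p - 1) / (2 ^ (p - 1) - 1) := by
          gcongr
          linarith
        exact mul_le_mul_of_nonneg_left (by linarith) ht.le

theorem sum_half_pow_mul_min_rpow_le (hp : 1 < p) (N : ℕ) {d : ℝ} (hd : 0 < d) :
    ∑ n ∈ Finset.range N, (1 / 2) ^ n * min 1 (2 ^ n * d) ^ p ≤
      (1 / (2 ^ (p - 1) - 1) + 4) * d := by
  have term_le : ∀ n ∈ Finset.range N, (1 / 2) ^ n * min 1 (2 ^ n * d) ^ p ≤
      d * (dyadicPotential p (2 ^ (n + 1) * d) - dyadicPotential p (2 ^ n * d)) := by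
    intro n _
    calc (1 / 2) ^ n * min 1 (2 ^ n * d) ^ p
        ≤ (1 / 2) ^ n * (2 ^ n * d *
          (dyadicPotential p (2 * (2 ^ n * d)) - dyadicPotential p (2 ^ n * d))) := by
          gcongr
          exact min_one_rpow_le_dyadicPotential_sub hp (by positivity)
      _ = _ := by
          rw [← mul_assoc, ← mul_assoc, ← mul_pow, one_div_mul_cancel two_ne_zero, one_pow,
            one_mul, ← mul_assoc 2, ← pow_succ']
  calc ∑ n ∈ Finset.range N, (1 / 2) ^ n * min 1 (2 ^ n * d) ^ p
      ≤ d * (dyadicPotential p (2 ^ N * d) - dyadicPotential p (2 ^ 0 * d)) := by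
        rw [← Finset.sum_range_sub (fun n => dyadicPotential p (2 ^ n * d)), Finset.mul_sum]
        exact Finset.sum_le_sum term_le
    _ ≤ d * (1 / (2 ^ (p - 1) - 1) + 4) := by
        have upper := dyadicPotential_le hp (t := 2 ^ N * d) (by positivity)
        have lower := neg_four_le_dyadicPotential hp (t := 2 ^ 0 * d) (by positivity)
        exact mul_le_mul_of_nonneg_left
          ((sub_le_sub upper lower).trans_eq (sub_neg_eq_add _ _)) hd.le
    _ = _ := mul_comm _ _

/-! ### The waves `hₙ` -/

/-- The distance `φ(t)` from `t` to the nearest integer, as the norm of the class of `t` in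
`ℝ / ℤ`. -/
noncomputable def distToInt (t : ℝ) : ℝ := ‖(t : UnitAddCircle)‖

theorem distToInt_nonneg (t : ℝ) : 0 ≤ distToInt t := norm_nonneg _

theorem distToInt_le_half (t : ℝ) : distToInt t ≤ 1 / 2 := by
  simpa [distToInt] using AddCircle.norm_le_half_period (1 : ℝ) one_ne_zero (x := t)

theorem continuous_distToInt : Continuous distToInt :=
  continuous_norm.comp (AddCircle.continuous_mk' 1)

theorem distToInt_add_natCast (t : ℝ) (n : ℕ) : distToInt (t + n) = distToInt t := by
  have natCast_eq_zero : ((n : ℝ) : UnitAddCircle) = 0 :=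
    AddCircle.coe_eq_zero_iff 1 |>.2 ⟨n, by simp⟩
  rw [distToInt, AddCircle.coe_add, natCast_eq_zero, add_zero, distToInt]

theorem abs_distToInt_sub_le (s t : ℝ) : |distToInt s - distToInt t| ≤ min 1 |s - t| := by
  refine le_min ?_ ?_
  · rw [abs_le]
    constructor <;> linarith [distToInt_nonneg s, distToInt_nonneg t, distToInt_le_half s,
      distToInt_le_half t]
  · calc |distToInt s - distToInt t| ≤ ‖((s - t : ℝ) : UnitAddCircle)‖ := abs_norm_sub_norm_le _ _
      _ ≤ |s - t| := QuotientAddGroup.norm_mk_le_norm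

theorem abs_distToInt_succ_div_two_sub (i : ℕ) :
    |distToInt ((i + 1 : ℕ) / 2) - distToInt (i / 2)| = 1 / 2 := by
  have distToInt_zero : distToInt 0 = 0 := by simp [distToInt]
  have distToInt_half : distToInt (1 / 2) = 1 / 2 := by
    simpa [distToInt] using AddCircle.norm_half_period_eq (1 : ℝ)
  obtain ⟨l, rfl | rfl⟩ := Nat.even_or_odd' i
  · rw [show ((2 * l + 1 : ℕ) : ℝ) / 2 = 1 / 2 + l by push_cast; ring,
      show ((2 * l : ℕ) : ℝ) / 2 = 0 + l by push_cast; ring]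
    simp only [distToInt_add_natCast, distToInt_zero, distToInt_half]
    norm_num
  · rw [show ((2 * l + 1 + 1 : ℕ) : ℝ) / 2 = 0 + (l + 1 : ℕ) by push_cast; ring,
      show ((2 * l + 1 : ℕ) : ℝ) / 2 = 1 / 2 + l by push_cast; ring]
    simp only [distToInt_add_natCast, distToInt_zero, distToInt_half]
    norm_num

/-- The factor `hₙ(y) = 2^(-n/p) φ(2ⁿ y)` of the `n`-th term of the series. -/
noncomputable def wave (p : ℝ) (n : ℕ) (y : ℝ) : ℝ := 2 ^ (-(n / p)) * distToInt (2 ^ n * y)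

theorem two_rpow_neg_div_rpow (hp : p ≠ 0) (n : ℕ) :
    ((2 : ℝ) ^ (-(n / p))) ^ p = (1 / 2) ^ n := by
  rw [← Real.rpow_mul zero_le_two, neg_mul, div_mul_cancel₀ _ hp, Real.rpow_neg zero_le_two,
    Real.rpow_natCast, one_div, inv_pow]

theorem summable_two_rpow_neg_div (hp : 0 < p) : Summable fun n : ℕ => (2 : ℝ) ^ (-(n / p)) := by
  have ratio_lt_one : (2 : ℝ) ^ (-(1 / p)) < 1 :=
    Real.rpow_lt_one_of_one_lt_of_neg one_lt_two (neg_neg_of_pos (by positivity))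
  refine (summable_geometric_of_lt_one (by positivity) ratio_lt_one).congr fun n => ?_
  rw [← Real.rpow_mul_natCast zero_le_two]
  ring_nf

theorem continuous_wave (p : ℝ) (n : ℕ) : Continuous (wave p n) :=
  continuous_const.mul (continuous_distToInt.comp (continuous_const_mul _))

theorem wave_add_one (p : ℝ) (n : ℕ) (y : ℝ) : wave p n (y + 1) = wave p n y := by
  have := distToInt_add_natCast (2 ^ n * y) (2 ^ n)
  push_cast at this
  rw [wave, mul_add, mul_one, this, wave]

theorem abs_wave_le (p : ℝ) (n : ℕ) (y : ℝ) : |wave p n y| ≤ 2 ^ (-(n / p)) := by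
  rw [wave, abs_mul, abs_of_pos (by positivity), abs_of_nonneg (distToInt_nonneg _)]
  exact mul_le_of_le_one_right (by positivity) ((distToInt_le_half _).trans (by norm_num))

theorem abs_wave_sub_rpow (hp : p ≠ 0) (n : ℕ) (y z : ℝ) :
    |wave p n z - wave p n y| ^ p =
      (1 / 2) ^ n * |distToInt (2 ^ n * z) - distToInt (2 ^ n * y)| ^ p := by
  rw [wave, wave, ← mul_sub, abs_mul, Real.mul_rpow (abs_nonneg _) (abs_nonneg _),
    abs_of_pos (by positivity), two_rpow_neg_div_rpow hp]

theorem sum_abs_wave_rpow_le (hp : 0 < p) (N : ℕ) (y : ℝ) :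
    ∑ n ∈ Finset.range N, |wave p n y| ^ p ≤ 2 := by
  refine (Finset.sum_le_sum fun n _ => ?_).trans (sum_geometric_two_le N)
  rw [← two_rpow_neg_div_rpow hp.ne']
  gcongr
  exact abs_wave_le p n y

theorem sum_abs_wave_sub_rpow_le (hp : 1 < p) (N : ℕ) {y z : ℝ} (hyz : y < z) :
    ∑ n ∈ Finset.range N, |wave p n z - wave p n y| ^ p ≤
      (1 / (2 ^ (p - 1) - 1) + 4) * (z - y) := by
  refine (Finset.sum_le_sum fun n _ => ?_).trans
    (sum_half_pow_mul_min_rpow_le hp N (sub_pos.2 hyz))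
  rw [abs_wave_sub_rpow (by linarith)]
  gcongr
  refine (abs_distToInt_sub_le _ _).trans_eq ?_
  rw [← mul_sub, abs_of_pos (mul_pos (by positivity) (sub_pos.2 hyz))]

theorem sum_sum_abs_wave_sub_rpow_le (hp : 1 < p) (N : ℕ) {m : ℕ} {y : ℕ → ℝ}
    (hy : IsPeriodPartition m y) :
    ∑ j ∈ Finset.range m, ∑ n ∈ Finset.range N, |wave p n (y (j + 1)) - wave p n (y j)| ^ p ≤
      1 / (2 ^ (p - 1) - 1) + 4 :=
  calc ∑ j ∈ Finset.range m, ∑ n ∈ Finset.range N, |wave p n (y (j + 1)) - wave p n (y j)| ^ p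
      ≤ ∑ j ∈ Finset.range m, (1 / (2 ^ (p - 1) - 1) + 4) * (y (j + 1) - y j) :=
        Finset.sum_le_sum fun j hj =>
          sum_abs_wave_sub_rpow_le hp N (hy.lt_succ j (Finset.mem_range.1 hj))
    _ = 1 / (2 ^ (p - 1) - 1) + 4 := by
        rw [← Finset.mul_sum, hy.sum_sub_eq (F := fun t => t) (fun _ => rfl), mul_one]

theorem isPeriodPartition_div {m : ℕ} (hm : m ≠ 0) : IsPeriodPartition m (fun i => i / m) where
  lt_succ i _ := by
    have : (0 : ℝ) < m := by positivity
    push_cast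
    gcongr
    linarith
  last_eq := by simp [hm]

theorem quarter_le_vp_half_mul_wave (hp : 0 < p) (k : ℕ) :
    ENNReal.ofReal (1 / 4) ≤ vp p (fun y => 1 / 2 * wave p k y) := by
  refine le_trans ?_ (le_vp (isPeriodPartition_div (m := 2 ^ (k + 1)) (by positivity)) p _)
  have step_rpow_eq (i : ℕ) : |1 / 2 * wave p k ((i + 1 : ℕ) / (2 ^ (k + 1) : ℕ)) -
      1 / 2 * wave p k (i / (2 ^ (k + 1) : ℕ))| ^ p = (1 / 2) ^ k * (1 / 4) ^ p := by
    have node_eq (j : ℕ) : 2 ^ k * ((j : ℝ) / (2 ^ (k + 1) : ℕ)) = j / 2 := by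
      push_cast
      field_simp
      ring
    rw [← mul_sub, abs_mul, Real.mul_rpow (abs_nonneg _) (abs_nonneg _),
      abs_wave_sub_rpow hp.ne', node_eq, node_eq, abs_distToInt_succ_div_two_sub, mul_left_comm,
      ← Real.mul_rpow (abs_nonneg _) (by norm_num)]
    norm_num
  have sum_eq : ∑ _i ∈ Finset.range (2 ^ (k + 1)), (1 / 2 : ℝ) ^ k * (1 / 4) ^ p =
      2 * (1 / 4) ^ p := by
    rw [Finset.sum_const, Finset.card_range, nsmul_eq_mul]
    push_cast
    rw [pow_succ, one_div, inv_pow]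
    field_simp
  rw [Finset.sum_congr rfl fun i _ => step_rpow_eq i, sum_eq, one_div p]
  gcongr
  rw [Real.le_rpow_inv_iff_of_pos (by norm_num) (by positivity) hp]
  exact le_mul_of_one_le_left (by positivity) one_le_two

/-! ### The function `f` -/

/-- The function of the paper, `f(x, y) = ∑ₙ 2^(-n/p) gₙ(x) φ(2ⁿ y)`. -/
noncomputable def tentWaveSeries (p x y : ℝ) : ℝ := ∑' n, periodicTent n x * wave p n y

theorem norm_periodicTent_mul_wave_le (p : ℝ) (n : ℕ) (x y : ℝ) :
    ‖periodicTent n x * wave p n y‖ ≤ 2 ^ (-(n / p)) := by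
  rw [norm_mul]
  have tent_le_one : |periodicTent n x| ≤ 1 :=
    (abs_le_of_sum_range_abs_le sum_abs_periodicTent_le n x).trans (by norm_num)
  exact (mul_le_of_le_one_left (norm_nonneg _) tent_le_one).trans (abs_wave_le p n y)

theorem hasSum_tentWaveSeries (hp : 0 < p) (x y : ℝ) :
    HasSum (fun n => periodicTent n x * wave p n y) (tentWaveSeries p x y) :=
  ((summable_two_rpow_neg_div hp).of_norm_bounded
    fun n => norm_periodicTent_mul_wave_le p n x y).hasSum

theorem continuous_tentWaveSeries (hp : 0 < p) :
    Continuous (Function.uncurry (tentWaveSeries p)) :=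
  continuous_tsum
    (fun n => ((continuous_periodicTent n).comp continuous_fst).mul
      ((continuous_wave p n).comp continuous_snd))
    (summable_two_rpow_neg_div hp) fun n z => norm_periodicTent_mul_wave_le p n z.1 z.2

theorem biPeriodic_tentWaveSeries (p : ℝ) : BiPeriodic (tentWaveSeries p) :=
  ⟨fun x y => by simp only [tentWaveSeries, periodicTent_add_one],
    fun x y => by simp only [tentWaveSeries, wave_add_one]⟩

theorem memHp2_tentWaveSeries (hp : 1 < p) : MemHp2 p (tentWaveSeries p) := by
  have hf := hasSum_tentWaveSeries (p := p) (by linarith)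
  have hV (n m : ℕ) (x : ℕ → ℝ) (hx : IsPeriodPartition m x) := sum_abs_periodicTent_sub_le n hx
  have hB (N m : ℕ) (y : ℕ → ℝ) (hy : IsPeriodPartition m y) :=
    sum_sum_abs_wave_sub_rpow_le hp N hy
  exact ⟨vp2_lt_top_of_hasSum_mul hp.le hf sum_abs_periodicTent_le hV hB,
    vp_left_section_lt_top_of_hasSum_mul hp.le hf sum_abs_periodicTent_le hB,
    fun y => vp_right_section_lt_top_of_hasSum_mul hp.le hf sum_abs_periodicTent_le hV
      fun N => sum_abs_wave_rpow_le (by linarith) N y⟩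

theorem vp_tentWaveSeries_one_div_two_pow (hp : p ≠ 0) (k : ℕ) :
    vp p (fun y => tentWaveSeries p (1 / 2 ^ (k + 1)) y) = 0 := by
  simp only [tentWaveSeries, periodicTent_one_div_two_pow, zero_mul, tsum_zero, vp_const hp]

theorem quarter_le_vp_tentWaveSeries_three_halves_div_two_pow (hp : 0 < p) (k : ℕ) :
    ENNReal.ofReal (1 / 4) ≤ vp p (fun y => tentWaveSeries p (3 / 2 / 2 ^ (k + 1)) y) := by
  simpa only [tentWaveSeries, periodicTent_three_halves_div_two_pow, ite_mul, zero_mul,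
    tsum_ite_eq] using
    quarter_le_vp_half_mul_wave hp (k + 1)

/-- The peaks `3 / 2ᵏ⁺²` of the tents alternating with the points `1 / 2ᵏ⁺¹` where all of them
vanish, in decreasing order. -/
noncomputable def oscillationNode (i : ℕ) : ℝ :=
  (if Even i then 3 / 2 else 1) / 2 ^ (i / 2 + 1)

theorem oscillationNode_two_mul (k : ℕ) : oscillationNode (2 * k) = 3 / 2 / 2 ^ (k + 1) := by
  simp [oscillationNode]

theorem oscillationNode_two_mul_add_one (k : ℕ) :
    oscillationNode (2 * k + 1) = 1 / 2 ^ (k + 1) := by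
  simp [oscillationNode, show (2 * k + 1) / 2 = k by omega]

theorem strictAnti_oscillationNode : StrictAnti oscillationNode := by
  refine strictAnti_nat_of_succ_lt fun i => ?_
  obtain ⟨k, rfl | rfl⟩ := Nat.even_or_odd' i
  · rw [oscillationNode_two_mul, oscillationNode_two_mul_add_one]
    gcongr
    norm_num
  · rw [show 2 * k + 1 + 1 = 2 * (k + 1) by ring, oscillationNode_two_mul,
      oscillationNode_two_mul_add_one, pow_succ _ (k + 1), div_lt_div_iff₀ (by positivity)
      (by positivity)]
    linarith [pow_pos (two_pos (α := ℝ)) (k + 1)]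

theorem vp_vp_tentWaveSeries_eq_top (hp : 1 < p) :
    vp p (fun x => (vp p (fun y => tentWaveSeries p x y)).toReal) = ⊤ := by
  have hp₀ : 0 < p := by linarith
  set Φ : ℝ → ℝ := fun x => (vp p (fun y => tentWaveSeries p x y)).toReal
  have zero_node (k : ℕ) : Φ (1 / 2 ^ (k + 1)) = 0 := by
    simp only [Φ, vp_tentWaveSeries_one_div_two_pow hp₀.ne', ENNReal.toReal_zero]
  have peak (k : ℕ) : 1 / 4 ≤ Φ (3 / 2 / 2 ^ (k + 1)) :=
    (ENNReal.ofReal_le_iff_le_toReal ((memHp2_tentWaveSeries hp).2.1 _).ne).1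
      (quarter_le_vp_tentWaveSeries_three_halves_div_two_pow hp₀ k)
  refine vp_eq_top_of_strictAnti hp₀ (c := 1 / 4) strictAnti_oscillationNode (fun n => ?_)
    (by norm_num) fun i => ?_
  · have : 0 < oscillationNode n := by
      unfold oscillationNode
      positivity
    have : oscillationNode 0 = 3 / 4 := by norm_num [oscillationNode]
    linarith
  · obtain ⟨k, rfl | rfl⟩ := Nat.even_or_odd' i
    · rw [oscillationNode_two_mul, oscillationNode_two_mul_add_one, zero_node, zero_sub, abs_neg]
      exact (peak k).trans (le_abs_self _)
    · rw [show 2 * k + 1 + 1 = 2 * (k + 1) by ring, oscillationNode_two_mul,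
        oscillationNode_two_mul_add_one, zero_node, sub_zero]
      exact (peak (k + 1)).trans (le_abs_self _)

end Counterexample

/-- For every `1 < p < ∞` there is a continuous biperiodic `f` with
`f ∈ H_p⁽²⁾` but `f ∉ V_p[V_p]`; hence `H_p⁽²⁾ ⊄ V_p[V_p]`. -/
theorem statement17 (p : ℝ) (hp : 1 < p) :
    ∃ f : ℝ → ℝ → ℝ, Continuous (Function.uncurry f) ∧ BiPeriodic f ∧
      MemHp2 p f ∧ ¬ MemVpVp p f := by
  refine ⟨tentWaveSeries p, continuous_tentWaveSeries (by linarith), biPeriodic_tentWaveSeries p,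
    memHp2_tentWaveSeries hp, ?_⟩
  rintro ⟨-, -, vp_vp_lt_top, -⟩
  exact vp_vp_lt_top.ne (vp_vp_tentWaveSeries_eq_top hp)
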